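/- Let X be a real random variable whose law has a density bounded by ρ, let c be a real number with |c| ≥ δ > 0, and let s ∈ (0,1). Then for every a ∈ ℝ, E[ |c X + a|^{−s} ] ≤ 1 + 2(ρ/δ) s/(1 − s). -/

import Mathlib

/-!
The bound is the layer-cake formula `E f = ∫₀^∞ P (f > t) dt` for `f = |cX + a|^(-s)`.
For `t ≤ 1` the tail is at most `1`, which contributes `1`. For `t > 1`, the event `f > t` forces
`|cX + a| < t^(-1/s)`, so `X` lies in an interval of length at most `2 t^(-1/s) / δ`, which has
probability at most `2 (ρ/δ) t^(-1/s)` (`measure_abs_affine_lt_le`);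
and `∫₁^∞ t^(-1/s) dt = s / (1 - s)` (`lintegral_tail`).
-/

open MeasureTheory

/-- The law `μ` (of a real random variable) has a probability density bounded by `ρ`. -/
def DensityBounded (μ : Measure ℝ) (ρ : ℝ) : Prop :=
  ∀ s : Set ℝ, MeasurableSet s → μ s ≤ ENNReal.ofReal ρ * MeasureTheory.volume s

/-- Small-ball estimate: `|cx + a| < r` confines `x` to the ball of radius `r / δ` about `-a / c`. -/
lemma measure_abs_affine_lt_le {Ω : Type*} [MeasurableSpace Ω] (P : Measure Ω)
    (X : Ω → ℝ) (hX : Measurable X) (ρ : ℝ) (hdens : DensityBounded (P.map X) ρ)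
    (c δ : ℝ) (hδ : 0 < δ) (hc : δ ≤ |c|) (a r : ℝ) :
    P {ω | |c * X ω + a| < r} ≤ ENNReal.ofReal ρ * ENNReal.ofReal (2 * (r / δ)) := by
  have hc0 : c ≠ 0 := by
    rintro rfl
    simp at hc
    linarith
  have hsub : {ω | |c * X ω + a| < r} ⊆ X ⁻¹' Metric.ball (-a / c) (r / δ) := by
    intro ω hω
    simp only [Set.mem_ofPred_eq, Set.mem_preimage, Metric.mem_ball, Real.dist_eq] at hω ⊢
    have h1 : c * X ω + a = c * (X ω - -a / c) := by field_simp; ring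
    rw [h1, abs_mul] at hω
    rw [lt_div_iff₀ hδ, mul_comm]
    exact lt_of_le_of_lt (mul_le_mul_of_nonneg_right hc (abs_nonneg _)) hω
  calc P {ω | |c * X ω + a| < r} ≤ P (X ⁻¹' Metric.ball (-a / c) (r / δ)) := measure_mono hsub
    _ = P.map X (Metric.ball (-a / c) (r / δ)) := (Measure.map_apply hX measurableSet_ball).symm
    _ ≤ _ := hdens _ measurableSet_ball
    _ = _ := by rw [Real.volume_ball]

lemma lintegral_tail (s : ℝ) (hs : s ∈ Set.Ioo (0 : ℝ) 1) :
    ∫⁻ t in Set.Ioi (1 : ℝ), ENNReal.ofReal (t ^ (-(1 / s))) = ENNReal.ofReal (s / (1 - s)) := by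
  obtain ⟨h0, h1⟩ := hs
  have hlt : -(1 / s) < -1 := neg_lt_neg (by rw [lt_div_iff₀ h0]; linarith)
  rw [← ofReal_integral_eq_lintegral_ofReal (integrableOn_Ioi_rpow_of_lt hlt one_pos),
    integral_Ioi_rpow_of_lt hlt one_pos]
  · congr 1
    have : (1 - s) ≠ 0 := by linarith
    have h2 : -(1 / s) + 1 = -((1 - s) / s) := by field_simp; ring
    rw [h2, Real.one_rpow, neg_div_neg_eq, one_div_div]
  · filter_upwards [ae_restrict_mem measurableSet_Ioi] with t ht
    exact Real.rpow_nonneg (zero_le_one.trans (le_of_lt ht)) _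

/-- if the real random variable `X` has a law with density bounded by `ρ`,
`|c| ≥ δ > 0` and `s ∈ (0,1)`, then for every `a ∈ ℝ`,
`E |cX + a|^{-s} ≤ 1 + 2(ρ/δ)s/(1-s)`. -/
theorem statement11
    {Ω : Type*} [MeasurableSpace Ω] (P : Measure Ω) [IsProbabilityMeasure P]
    (X : Ω → ℝ) (hX : Measurable X) (ρ : ℝ) (hdens : DensityBounded (P.map X) ρ)
    (c δ : ℝ) (hδ : 0 < δ) (hc : δ ≤ |c|)
    (s : ℝ) (hs : s ∈ Set.Ioo (0 : ℝ) 1) (a : ℝ) :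
    ∫⁻ ω, ENNReal.ofReal |c * X ω + a| ^ (-s) ∂P
      ≤ ENNReal.ofReal (1 + 2 * (ρ / δ) * s / (1 - s)) := by
  have hs0 := hs.1
  have hs1 : 0 < 1 - s := by linarith [hs.2]
  have hc0 : c ≠ 0 := by
    rintro rfl
    simp at hc
    linarith
  -- A negative `ρ` would make the law of `X` vanish.
  have hρ : 0 ≤ ρ := by
    by_contra! h
    have h1 := hdens Set.univ MeasurableSet.univ
    rw [ENNReal.ofReal_of_nonpos h.le, Measure.map_apply hX MeasurableSet.univ] at h1
    simp at h1
  -- The integrand is `⊤` where `cX + a = 0`, while the real power is `0` there.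
  have hae : ∀ᵐ ω ∂P, c * X ω + a ≠ 0 := by
    have h1 := hdens {-a / c} (measurableSet_singleton _)
    rw [Measure.map_apply hX (measurableSet_singleton _), Real.volume_singleton, mul_zero] at h1
    rw [ae_iff]
    refine measure_mono_null (fun ω hω => ?_) (le_antisymm h1 zero_le)
    simp only [ne_eq, not_not, Set.mem_ofPred_eq, Set.mem_preimage, Set.mem_singleton_iff] at hω ⊢
    rw [eq_div_iff hc0]
    linarith
  have hreal : ∫⁻ ω, ENNReal.ofReal |c * X ω + a| ^ (-s) ∂P
      = ∫⁻ ω, ENNReal.ofReal (|c * X ω + a| ^ (-s)) ∂P := by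
    refine lintegral_congr_ae ?_
    filter_upwards [hae] with ω hω
    exact ENNReal.ofReal_rpow_of_pos (abs_pos.mpr hω)
  have htail : ∀ t ∈ Set.Ioi (1 : ℝ), P {ω | t < |c * X ω + a| ^ (-s)}
      ≤ ENNReal.ofReal (ρ * (2 / δ)) * ENNReal.ofReal (t ^ (-(1 / s))) := by
    intro t ht
    have ht0 : (0 : ℝ) < t := one_pos.trans ht
    have hsub : {ω | t < |c * X ω + a| ^ (-s)} ⊆ {ω | |c * X ω + a| < t ^ (-(1 / s))} := by
      intro ω hω
      simp only [Set.mem_ofPred_eq] at hω ⊢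
      rcases (abs_nonneg (c * X ω + a)).eq_or_lt with h | h
      · rw [← h]
        positivity
      · have h2 := Real.rpow_lt_rpow_of_neg ht0 hω (z := -(1 / s)) (by
          have : 0 < 1 / s := by positivity
          linarith)
        rwa [← Real.rpow_mul h.le, neg_mul_neg, mul_one_div_cancel hs0.ne', Real.rpow_one] at h2
    refine (measure_mono hsub).trans
      ((measure_abs_affine_lt_le P X hX ρ hdens c δ hδ hc a _).trans_eq ?_)
    rw [← ENNReal.ofReal_mul hρ, ← ENNReal.ofReal_mul (by positivity)]
    congr 1
    ring
  rw [hreal, lintegral_eq_lintegral_meas_lt P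
    (Filter.Eventually.of_forall fun ω => Real.rpow_nonneg (abs_nonneg _) _)
    (by fun_prop), ← Set.Ioc_union_Ioi_eq_Ioi (zero_le_one' ℝ),
    lintegral_union measurableSet_Ioi (Set.Ioc_disjoint_Ioi le_rfl)]
  calc _ ≤ (∫⁻ _ in Set.Ioc (0 : ℝ) 1, 1) + ∫⁻ t in Set.Ioi (1 : ℝ),
        ENNReal.ofReal (ρ * (2 / δ)) * ENNReal.ofReal (t ^ (-(1 / s))) :=
        add_le_add (lintegral_mono fun _ => prob_le_one)
          (setLIntegral_mono' measurableSet_Ioi htail)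
    _ = 1 + ENNReal.ofReal (ρ * (2 / δ)) * ENNReal.ofReal (s / (1 - s)) := by
        rw [lintegral_const_mul' _ _ ENNReal.ofReal_ne_top, lintegral_tail s hs]
        simp
    _ = ENNReal.ofReal (1 + 2 * (ρ / δ) * s / (1 - s)) := by
        rw [← ENNReal.ofReal_mul (by positivity), ← ENNReal.ofReal_one,
          ← ENNReal.ofReal_add zero_le_one (by positivity)]
        congr 1
        ring
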